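/- Let f : 𝖱^n → 𝖱 be continuous and bounded. Then there exist x, c ∈ 𝖱 such that f is identically equal to c on [x, ω₁)^n = {y ∈ 𝖱^n : y_i ≥ x for all i}. -/

import Mathlib

noncomputable section
open Set

/-- The first uncountable ordinal `ω₁`. -/
def Omega1 : Ordinal := Ordinal.omega 1

/-- The closed long ray `𝖱`: `ω₁ × [0,1)` with the lexicographic order. -/
def LongRay : Type 1 := {o : Ordinal // o < Omega1} ×ₗ (Set.Ico (0:ℝ) 1)

instance : LinearOrder LongRay :=
  inferInstanceAs (LinearOrder ({o : Ordinal // o < Omega1} ×ₗ (Set.Ico (0:ℝ) 1)))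

/-- `𝖱` carries the order topology. -/
instance : TopologicalSpace LongRay := Preorder.topology LongRay
instance : OrderTopology LongRay := ⟨rfl⟩

lemma omega1_pos : (0 : Ordinal) < Omega1 := Ordinal.omega_pos 1

/-- The point `0 = (0,0)` of the long ray. -/
def rayZero : LongRay := toLex (⟨0, omega1_pos⟩, ⟨0, by simp⟩)

/-- Identification of the countable ordinal `o` with the point `(o,0)` of the long ray
(junk value for `o ≥ ω₁`). -/
def ordR (o : Ordinal) : LongRay :=
  if h : o < Omega1 then toLex (⟨o, h⟩, ⟨0, by simp⟩) else rayZero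

/-- The `I`-diagonal at height `c` (only the values of `c` off `I` are relevant). -/
def Delta (n : ℕ) (I : Finset (Fin n)) (c : Fin n → LongRay) : Set (Fin n → LongRay) :=
  {x | (∀ i ∈ I, ∀ i' ∈ I, x i = x i') ∧ ∀ j ∉ I, x j = c j}

/-- `f` is `I`-cofinal if `f` restricted to `Δ_I = Δ_I(0)` is unbounded. -/
def ICofinal (n : ℕ) (f : (Fin n → LongRay) → LongRay) (I : Finset (Fin n)) : Prop :=
  ¬ BddAbove (f '' Delta n I (fun _ => rayZero))

/-- The cofinality class `𝔠(f) = {I : f is I-cofinal}`. -/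
def cofClass (n : ℕ) (f : (Fin n → LongRay) → LongRay) : Set (Finset (Fin n)) :=
  {I | ICofinal n f I}

/-- `M_I(c) = {x : x_i ≥ c for all i ∈ I}`. -/
def MSet (n : ℕ) (I : Finset (Fin n)) (c : LongRay) : Set (Fin n → LongRay) :=
  {x | ∀ i ∈ I, c ≤ x i}

/-- `E_I(b,d) = {x ∈ M_I(d) : x_j = b_j for all j ∉ I}`. -/
def ESet (n : ℕ) (I : Finset (Fin n)) (b : Fin n → LongRay) (d : LongRay) :
    Set (Fin n → LongRay) :=
  {x | (∀ i ∈ I, d ≤ x i) ∧ ∀ j ∉ I, x j = b j}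

/-!
Two closed cofinal subsets of `𝖱ⁿ` always meet, by leapfrogging between them. Hence a continuous
map `g` from `𝖱ⁿ` to a perfectly normal space is, for every open `U`, eventually in `U` or
eventually outside `U`: `U` is a countable union of closed sets, and if `g` is cofinally outside `U`
then it eventually avoids each of them, and so all of them at once, as any countably many corners
contain a common corner. A bounded `f` takes its values in some `[0, z]`, which is
second countable, and applying this to countably many open sets separating the points of `[0, z]`
shows that `f` is eventually constant.
-/

open Filter Topology TopologicalSpace

/-- A preorder in which every nonempty countable subset has a least upper bound: the property of
the long ray, inherited by its powers, that makes closed cofinal subsets meet. -/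
class CountablySupComplete (P : Type*) [Preorder P] : Prop where
  exists_isLUB_of_countable : ∀ s : Set P, s.Countable → s.Nonempty → ∃ a, IsLUB s a

namespace CountablySupComplete

instance pi {ι : Type*} {X : ι → Type*} [∀ i, Preorder (X i)] [∀ i, CountablySupComplete (X i)] :
    CountablySupComplete (∀ i, X i) where
  exists_isLUB_of_countable s hs hne := by
    choose a ha using fun i => exists_isLUB_of_countable (Function.eval i '' s)
      (hs.image _) (hne.image _)
    exact ⟨a, isLUB_pi.2 ha⟩

variable {P : Type*} [Preorder P] [CountablySupComplete P]

lemma bddAbove_of_countable [Nonempty P] {s : Set P} (hs : s.Countable) : BddAbove s := by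
  rcases s.eq_empty_or_nonempty with rfl | hne
  · exact bddAbove_empty
  · obtain ⟨a, ha⟩ := exists_isLUB_of_countable s hs hne
    exact ha.bddAbove

instance isDirectedOrder : IsDirectedOrder P where
  directed a b := by
    obtain ⟨c, hc⟩ := exists_isLUB_of_countable {a, b} (by simp) (by simp)
    exact ⟨c, hc.1 (by simp), hc.1 (by simp)⟩

variable [Nonempty P]

instance countableInterFilter_atTop : CountableInterFilter (atTop : Filter P) where
  countable_sInter_mem S hS hmem := by
    have : Countable S := hS.to_subtype
    choose a ha using fun s : S => mem_atTop_sets.1 (hmem s s.2)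
    obtain ⟨b, hb⟩ := bddAbove_of_countable (countable_range a)
    exact mem_atTop_sets.2 ⟨b, fun x hx s hs => ha ⟨s, hs⟩ x ((hb ⟨⟨s, hs⟩, rfl⟩).trans hx)⟩

variable [TopologicalSpace P] [SupConvergenceClass P]

/-- Leapfrogging between the two sets yields interleaved increasing sequences, whose common
supremum lies in both. -/
theorem inter_nonempty_of_frequently_atTop {A B : Set P} (hA : IsClosed A) (hB : IsClosed B)
    (hfA : ∃ᶠ x in atTop, x ∈ A) (hfB : ∃ᶠ x in atTop, x ∈ B) : (A ∩ B).Nonempty := by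
  choose a le_a a_mem using frequently_atTop.1 hfA
  choose b le_b b_mem using frequently_atTop.1 hfB
  let u : ℕ → P := fun n => (b ∘ a)^[n] (Classical.arbitrary P)
  have u_succ (n) : u (n + 1) = b (a (u n)) := Function.iterate_succ_apply' _ _ _
  have au_le (n) : a (u n) ≤ u (n + 1) := (le_b _).trans_eq (u_succ n).symm
  have u_mono : Monotone u := monotone_nat_of_le_succ fun n => (le_a _).trans (au_le n)
  have au_mono : Monotone (a ∘ u) := monotone_nat_of_le_succ fun n => (au_le n).trans (le_a _)
  obtain ⟨s, hs⟩ := exists_isLUB_of_countable (range u) (countable_range u) (range_nonempty u)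
  have hs' : IsLUB (range (a ∘ u)) s :=
    ⟨forall_mem_range.2 fun n => (au_le n).trans (hs.1 ⟨n + 1, rfl⟩),
      fun t ht => hs.2 <| forall_mem_range.2 fun n => (le_a _).trans (ht ⟨n, rfl⟩)⟩
  refine ⟨s, ?_, ?_⟩
  · exact hA.mem_of_tendsto (tendsto_atTop_isLUB au_mono hs') (.of_forall fun n => a_mem _)
  · refine hB.mem_of_tendsto ((tendsto_add_atTop_iff_nat 1).2 (tendsto_atTop_isLUB u_mono hs))
      (.of_forall fun n => ?_)
    exact u_succ n ▸ b_mem _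

variable {Y : Type*} [TopologicalSpace Y] [PerfectlyNormalSpace Y] {f : P → Y}

theorem eventually_mem_or_eventually_notMem (hf : Continuous f) {U : Set Y} (hU : IsOpen U) :
    (∀ᶠ x in atTop, f x ∈ U) ∨ ∀ᶠ x in atTop, f x ∉ U := by
  refine or_iff_not_imp_left.2 fun hfreq => ?_
  obtain ⟨V, hV, hUV⟩ := isGδ_iff_eq_iInter_nat.1 hU.isClosed_compl.isGδ
  have eventually_mem (n) : ∀ᶠ x in atTop, f x ∈ V n := by
    by_contra hn
    obtain ⟨x, hxU, hxV⟩ := inter_nonempty_of_frequently_atTop (hU.isClosed_compl.preimage hf)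
      ((hV n).isClosed_compl.preimage hf) (not_eventually.1 hfreq) (not_eventually.1 hn)
    exact hxV (mem_iInter.1 (hUV ▸ hxU) n)
  filter_upwards [eventually_countable_forall.2 eventually_mem] with x hx
  exact hUV.ge (mem_iInter.2 hx)

theorem exists_eventuallyEq_const [T0Space Y] [SecondCountableTopology Y] (hf : Continuous f) :
    ∃ c, f =ᶠ[atTop] Function.const P c :=
  have : Nonempty Y := ‹Nonempty P›.map f
  exists_eventuallyEq_const_of_forall_separating IsOpen fun _ =>
    eventually_mem_or_eventually_notMem hf

end CountablySupComplete

section Lex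

variable {α β : Type*}

/-- The least upper bound is `(a, inf T)`, where `a` is the least first coordinate of an upper bound
and `T` is the set of `t` for which `(a, t)` is an upper bound. -/
lemma exists_isLUB_lex [LinearOrder α] [WellFoundedLT α] [ConditionallyCompleteLinearOrder β]
    [OrderBot β] {S : Set (α ×ₗ β)} (hS : BddAbove S) : ∃ s, IsLUB S s := by
  obtain ⟨u, hu, hmin⟩ :=
    exists_minimalFor_of_wellFoundedLT (· ∈ upperBounds S) (fun x => (ofLex x).1) hS
  set a := (ofLex u).1
  let T : Set β := {t | toLex (a, t) ∈ upperBounds S}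
  have hT : IsGLB T (sInf T) := isGLB_csInf ⟨(ofLex u).2, hu⟩ (OrderBot.bddBelow T)
  refine ⟨toLex (a, sInf T), fun s hs => ?_, fun v hv => ?_⟩
  · rcases Prod.Lex.le_iff.1 (hu hs) with h | ⟨h, -⟩
    · exact Prod.Lex.le_iff.2 (.inl h)
    · refine Prod.Lex.le_iff.2 (.inr ⟨h, hT.2 fun t ht => ?_⟩)
      exact ((Prod.Lex.le_iff.1 (ht hs)).resolve_left h.not_lt).2
  · have hav : a ≤ (ofLex v).1 := (le_total a (ofLex v).1).elim id (hmin hv)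
    refine Prod.Lex.le_iff.2 (hav.lt_or_eq.imp_right fun h => ⟨h, hT.1 ?_⟩)
    have hv_eq : toLex (a, (ofLex v).2) = v := congrArg toLex (Prod.ext h rfl)
    exact hv_eq.symm ▸ hv

lemma exists_mem_Ioo_lex_of_dense [Preorder α] [LinearOrder β] [DenselyOrdered β] [NoMaxOrder β]
    [TopologicalSpace β] [OrderTopology β] {E : Set β} (hE : Dense E) {x y : α ×ₗ β} (hxy : x < y) :
    ∃ e ∈ E, toLex ((ofLex x).1, e) ∈ Ioo x y := by
  rcases Prod.Lex.lt_iff.1 hxy with h | ⟨h, hlt⟩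
  · obtain ⟨e, he, hxe⟩ := hE.exists_gt (ofLex x).2
    exact ⟨e, he, Prod.Lex.lt_iff.2 (.inr ⟨rfl, hxe⟩), Prod.Lex.lt_iff.2 (.inl h)⟩
  · obtain ⟨e, he, hxe, hey⟩ := hE.exists_between hlt
    exact ⟨e, he, Prod.Lex.lt_iff.2 (.inr ⟨rfl, hxe⟩), Prod.Lex.lt_iff.2 (.inr ⟨h, hey⟩)⟩

end Lex

lemma secondCountableTopology_of_orderDense {X : Type*} [LinearOrder X] [TopologicalSpace X]
    [OrderTopology X] {D : Set X} (hD : D.Countable)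
    (hbtw : ∀ ⦃a b : X⦄, a < b → ∃ d ∈ D, d ∈ Ioo a b) : SecondCountableTopology X := by
  have : DenselyOrdered X := ⟨fun a b hab => (hbtw hab).imp fun _ => And.right⟩
  have : SeparableSpace X := by
    cases subsingleton_or_nontrivial X
    · infer_instance
    · exact ⟨D, hD, dense_of_exists_between hbtw⟩
  exact SecondCountableTopology.of_separableSpace_orderTopology X

lemma countable_Iio_of_lt_omega1 {o : Ordinal} (ho : o < Omega1) : (Iio o).Countable := by
  rw [← Cardinal.le_aleph0_iff_set_countable, Cardinal.mk_Iio_ordinal, Cardinal.lift_le_aleph0,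
    ← Order.lt_succ_iff, Cardinal.succ_aleph0]
  exact Cardinal.lt_omega_iff_card_lt.1 ho

lemma succ_lt_omega1 {o : Ordinal} (ho : o < Omega1) : Order.succ o < Omega1 :=
  (Cardinal.isSuccLimit_omega 1).succ_lt ho

lemma countable_Iic_omega1 (o : {o : Ordinal // o < Omega1}) : (Iic o).Countable := by
  refine ((countable_Iio_of_lt_omega1 (succ_lt_omega1 o.2)).preimage
    Subtype.val_injective).mono fun p hp => ?_
  exact Order.lt_succ_of_le (show (p : Ordinal) ≤ o from hp)

lemma exists_forall_lt_of_countable {s : Set {o : Ordinal // o < Omega1}} (hs : s.Countable) :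
    ∃ b, ∀ a ∈ s, a < b := by
  have : Countable s := hs.to_subtype
  have hsup : ⨆ a : s, (a : Ordinal) < Omega1 := Ordinal.iSup_lt_omega_one fun a => a.1.2
  exact ⟨⟨_, succ_lt_omega1 hsup⟩, fun a ha =>
    Order.lt_succ_of_le (Ordinal.le_iSup (fun a : s => (a : Ordinal)) ⟨a, ha⟩)⟩

namespace LongRay

instance : Nonempty LongRay := ⟨rayZero⟩

lemma bddAbove_of_countable {S : Set LongRay} (hS : S.Countable) : BddAbove S := by
  obtain ⟨b, hb⟩ := exists_forall_lt_of_countable (hS.image fun x => (ofLex x).1)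
  exact ⟨toLex (b, ⟨0, by simp⟩), fun x hx => Prod.Lex.le_iff.2 (.inl (hb _ ⟨x, hx, rfl⟩))⟩

instance : CountablySupComplete LongRay where
  exists_isLUB_of_countable _ hS _ :=
    have : Inhabited (Ico (0 : ℝ) 1) := ⟨⟨0, by simp⟩⟩
    have : OrderBot (Ico (0 : ℝ) 1) := { bot := ⟨0, by simp⟩, bot_le := fun t => t.2.1 }
    exists_isLUB_lex (bddAbove_of_countable hS)

instance secondCountableTopology_Iic (z : LongRay) : SecondCountableTopology (Iic z) := by
  obtain ⟨E, hE, hE'⟩ := exists_countable_dense (Ico (0 : ℝ) 1)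
  let D : Set LongRay := (fun p => toLex p) '' (Iic (ofLex z).1 ×ˢ E)
  have hD : D.Countable := ((countable_Iic_omega1 _).prod hE).image _
  refine secondCountableTopology_of_orderDense (hD.preimage Subtype.val_injective)
    fun a b hab => ?_
  obtain ⟨e, he, hae, heb⟩ := exists_mem_Ioo_lex_of_dense hE' (Subtype.coe_lt_coe.2 hab)
  have haz : (ofLex a.1).1 ≤ (ofLex z).1 := Prod.Lex.monotone_fst _ _ a.2
  exact ⟨⟨_, heb.le.trans b.2⟩, ⟨((ofLex a.1).1, e), ⟨haz, he⟩, rfl⟩, hae, heb⟩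

end LongRay

theorem bounded_constant_on_corner_general {ι : Type*} [Countable ι]
    (f : (ι → LongRay) → LongRay) (hf : Continuous f) (hbd : BddAbove (range f)) :
    ∃ x c : LongRay, ∀ y : ι → LongRay, (∀ i, x ≤ y i) → f y = c := by
  obtain ⟨z, hz⟩ := hbd
  have hg : Continuous (fun y => ⟨f y, hz ⟨y, rfl⟩⟩ : (ι → LongRay) → Iic z) := hf.subtype_mk _
  obtain ⟨c, hc⟩ := CountablySupComplete.exists_eventuallyEq_const hg
  obtain ⟨a, ha⟩ := eventually_atTop.1 hc
  obtain ⟨x, hx⟩ := LongRay.bddAbove_of_countable (countable_range a)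
  exact ⟨x, c, fun y hy => congrArg Subtype.val (ha y fun i => (hx ⟨i, rfl⟩).trans (hy i))⟩

/-- a continuous bounded `f : 𝖱ⁿ → 𝖱` is constant on `[x, ω₁)ⁿ`
for some `x`. -/
theorem bounded_constant_on_corner (n : ℕ) (f : (Fin n → LongRay) → LongRay)
    (hf : Continuous f) (hbd : BddAbove (Set.range f)) :
    ∃ x c : LongRay, ∀ y : Fin n → LongRay, (∀ i, x ≤ y i) → f y = c :=
  bounded_constant_on_corner_general f hf hbd
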